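/- arXiv:1203.1478 — 2 statements merged into one kernel-verified Lean document; each statement's English description precedes it below -/
import Mathlib

section
/- Assume a(s)/(log s)^{2γ} → a_∞ and f(s)/e^{2βs} → f_∞ as s → +∞ with γ, β, a_∞, f_∞ > 0. Then there exists r with f(r) > 0, f ≥ 0 on (r,∞), and ∫_{g⁻¹(r)}^{+∞} ds/√(F(g(s))) < ∞, where F(t) = ∫_r^t f. -/
open Filter Topology MeasureTheory

/-!
The substitution `t = g s` turns the integral into `∫ √(a t / F t) dt` over `[r, ∞)`, because
`ds = √(a t) dt`. Near `r` the primitive `F` grows at least linearly, so the singularity is at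
worst `(t - r) ^ (-1/2)`. At infinity, `F t` is at least the integral of `f` over `[t - 1, t]`, so
it inherits the growth rate `exp (2 β t)` of `f`. The coefficient `a`, a power of a logarithm, is
`O(exp (β t))`, so the integrand decays exponentially.
-/

section ChangeOfVariables

variable {E : Type*} [NormedAddCommGroup E] [NormedSpace ℝ E]

lemma integrableOn_Ici_comp_iff_of_hasDerivAt_one_div {g w : ℝ → ℝ} (hw : ∀ t, 0 < w t)
    (hg : ∀ s, HasDerivAt g (1 / w (g s)) s) (hsurj : Function.Surjective g) (h : ℝ → E)
    (s₀ : ℝ) :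
    IntegrableOn (fun s => h (g s)) (Set.Ici s₀) ↔
      IntegrableOn (fun t => w t • h t) (Set.Ici (g s₀)) := by
  have hmono : StrictMono g := strictMono_of_deriv_pos fun s => by
    rw [(hg s).deriv]
    exact one_div_pos.2 (hw _)
  have himage : g '' Set.Ici s₀ = Set.Ici (g s₀) :=
    (hmono.orderIsoOfSurjective g hsurj).image_Ici s₀
  rw [← himage, integrableOn_image_iff_integrableOn_abs_deriv_smul measurableSet_Ici
    (fun s _ => (hg s).hasDerivWithinAt) hmono.injective.injOn]
  refine integrableOn_congr_fun (fun s _ => ?_) measurableSet_Ici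
  have hws := hw (g s)
  simp only [abs_of_pos (one_div_pos.2 hws), smul_smul, one_div_mul_cancel hws.ne', one_smul]

end ChangeOfVariables

lemma sub_mul_le_integral {f : ℝ → ℝ} {r s t m : ℝ} (hrs : r ≤ s) (hst : s ≤ t)
    (hf : IntervalIntegrable f volume r t) (hf_nonneg : ∀ x ∈ Set.Icc r s, 0 ≤ f x)
    (hm : ∀ x ∈ Set.Icc s t, m ≤ f x) :
    (t - s) * m ≤ ∫ x in r..t, f x := by
  have hs : s ∈ Set.uIcc r t := Set.mem_uIcc_of_le hrs hst
  have hf_left : IntervalIntegrable f volume r s :=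
    hf.mono_set (Set.uIcc_subset_uIcc_left hs)
  have hf_right : IntervalIntegrable f volume s t :=
    hf.mono_set (Set.uIcc_subset_uIcc_right hs)
  calc (t - s) * m = ∫ _ in s..t, m := by rw [intervalIntegral.integral_const, smul_eq_mul]
    _ ≤ ∫ x in s..t, f x :=
        intervalIntegral.integral_mono_on hst intervalIntegrable_const hf_right hm
    _ ≤ (∫ x in r..s, f x) + ∫ x in s..t, f x :=
        le_add_of_nonneg_left (intervalIntegral.integral_nonneg hrs hf_nonneg)
    _ = ∫ x in r..t, f x := intervalIntegral.integral_add_adjacent_intervals hf_left hf_right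

section SqrtDiv

lemma integrableOn_Ioc_sqrt_inv_sub (r R : ℝ) :
    IntegrableOn (fun t => √(t - r)⁻¹) (Set.Ioc r R) := by
  have hrpow : IntervalIntegrable (fun t : ℝ => (t - r) ^ (-(1 / 2) : ℝ)) volume r R := by
    simpa only [zero_add, sub_add_cancel] using
      (intervalIntegral.intervalIntegrable_rpow' (a := 0) (b := R - r)
        (by norm_num : (-1 : ℝ) < -(1 / 2))).comp_sub_right r
  refine hrpow.1.congr_fun (fun t ht => ?_) measurableSet_Ioc
  have htr : 0 ≤ t - r := sub_nonneg.2 ht.1.le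
  simp only [Real.rpow_neg htr, ← Real.sqrt_eq_rpow, Real.sqrt_inv]

lemma integrableOn_Ioc_sqrt_div_of_mul_sub_le {a F : ℝ → ℝ} {r R m : ℝ}
    (ha : ContinuousOn a (Set.Icc r R)) (ha_nonneg : ∀ t ∈ Set.Ioc r R, 0 ≤ a t)
    (hF : ContinuousOn F (Set.Ioc r R)) (hm : 0 < m)
    (hmF : ∀ t ∈ Set.Ioc r R, (t - r) * m ≤ F t) :
    IntegrableOn (fun t => √(a t / F t)) (Set.Ioc r R) := by
  have hlin : ∀ t ∈ Set.Ioc r R, 0 < (t - r) * m := fun t ht => mul_pos (sub_pos.2 ht.1) hm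
  have hmeas : AEStronglyMeasurable (fun t => √(a t / F t)) (volume.restrict (Set.Ioc r R)) :=
    (((ha.mono Set.Ioc_subset_Icc_self).div hF
      fun t ht => ((hlin t ht).trans_le (hmF t ht)).ne').sqrt).aestronglyMeasurable
        measurableSet_Ioc
  have hdom : IntegrableOn (fun t => √(a t / m) * √(t - r)⁻¹) (Set.Ioc r R) := by
    have hbase := (integrableOn_Icc_iff_integrableOn_Ioc (by finiteness)).2
      (integrableOn_Ioc_sqrt_inv_sub r R)
    exact (hbase.continuousOn_mul (ha.div_const m).sqrt isCompact_Icc).mono_set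
      Set.Ioc_subset_Icc_self
  refine hdom.mono' hmeas ((ae_restrict_iff' measurableSet_Ioc).2 (ae_of_all _ fun t ht => ?_))
  rw [Real.norm_of_nonneg (Real.sqrt_nonneg _),
    ← Real.sqrt_mul (div_nonneg (ha_nonneg t ht) hm.le)]
  refine Real.sqrt_le_sqrt ?_
  calc a t / F t ≤ a t / ((t - r) * m) :=
        div_le_div_of_nonneg_left (ha_nonneg t ht) (hlin t ht) (hmF t ht)
    _ = a t / m * (t - r)⁻¹ := by rw [mul_comm, ← div_div, div_eq_mul_inv (a t / m)]

lemma integrableOn_Ioi_sqrt_div_of_isBigO_exp {a F : ℝ → ℝ} {R α β : ℝ}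
    (ha : ContinuousOn a (Set.Ici R)) (hF : ContinuousOn F (Set.Ici R))
    (hF_ne : ∀ t ∈ Set.Ici R, F t ≠ 0) (hαβ : α < β)
    (haO : a =O[atTop] fun t => Real.exp (α * t))
    (hFO : (fun t => Real.exp (β * t)) =O[atTop] F) :
    IntegrableOn (fun t => √(a t / F t)) (Set.Ioi R) := by
  have hquot : (fun t => a t / F t) =O[atTop] fun t => Real.exp (-(β - α) * t) := by
    have hinv := hFO.inv_rev (.of_forall fun t ht => absurd ht (Real.exp_ne_zero _))
    refine (haO.mul hinv).congr (fun t => (div_eq_mul_inv _ _).symm) fun t => ?_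
    rw [← Real.exp_neg, ← Real.exp_add]
    ring_nf
  refine integrable_of_isBigO_exp_neg (half_pos (sub_pos.2 hαβ)) (ha.div hF hF_ne).sqrt ?_
  refine (hquot.sqrt (.of_forall fun t => (Real.exp_pos _).le)).congr_right fun t => ?_
  rw [← Real.exp_half]
  ring_nf

end SqrtDiv

section ExponentialGrowth

lemma exp_isBigO_integral {f : ℝ → ℝ} {r β c : ℝ} (hf : Continuous f) (hβ : 0 ≤ β) (hc : 0 < c)
    (hcf : ∀ s, r ≤ s → c * Real.exp (β * s) ≤ f s) :
    (fun t => Real.exp (β * t)) =O[atTop] fun t => ∫ τ in r..t, f τ := by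
  refine .of_bound (Real.exp β / c) ?_
  filter_upwards [eventually_ge_atTop (r + 1)] with t ht
  have hrt : r ≤ t - 1 := le_sub_iff_add_le.2 ht
  have hf_nonneg : ∀ x ∈ Set.Icc r (t - 1), 0 ≤ f x := fun x hx =>
    (by positivity : 0 ≤ c * Real.exp (β * x)).trans (hcf x hx.1)
  have hf_last : ∀ x ∈ Set.Icc (t - 1) t, c * Real.exp (β * (t - 1)) ≤ f x := fun x hx =>
    calc c * Real.exp (β * (t - 1)) ≤ c * Real.exp (β * x) := by gcongr; exact hx.1
      _ ≤ f x := hcf x (hrt.trans hx.1)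
  have hlower : c * Real.exp (β * (t - 1)) ≤ ∫ τ in r..t, f τ := by
    simpa only [sub_sub_cancel, one_mul] using
      sub_mul_le_integral hrt (sub_le_self t zero_le_one) (hf.intervalIntegrable r t)
        hf_nonneg hf_last
  rw [Real.norm_of_nonneg (Real.exp_pos _).le,
    Real.norm_of_nonneg ((by positivity : 0 ≤ c * Real.exp (β * (t - 1))).trans hlower)]
  calc Real.exp (β * t) = Real.exp β / c * (c * Real.exp (β * (t - 1))) := by
        rw [← mul_assoc, div_mul_cancel₀ _ hc.ne', ← Real.exp_add]
        ring_nf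
    _ ≤ Real.exp β / c * ∫ τ in r..t, f τ := by gcongr

lemma integrableOn_Ici_sqrt_div_integral {a f : ℝ → ℝ} {r α β c : ℝ} (ha : Continuous a)
    (ha_nonneg : ∀ t, 0 ≤ a t) (hf : Continuous f) (hβ : 0 ≤ β) (hαβ : α < β) (hc : 0 < c)
    (haO : a =O[atTop] fun s => Real.exp (α * s))
    (hcf : ∀ s, r ≤ s → c * Real.exp (β * s) ≤ f s) :
    IntegrableOn (fun t => √(a t / ∫ τ in r..t, f τ)) (Set.Ici r) := by
  obtain ⟨m, hm, hmf⟩ : ∃ m > 0, ∀ s, r ≤ s → m ≤ f s :=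
    ⟨c * Real.exp (β * r), by positivity, fun s hs =>
      calc c * Real.exp (β * r) ≤ c * Real.exp (β * s) := by gcongr
        _ ≤ f s := hcf s hs⟩
  have hlinear : ∀ t, r ≤ t → (t - r) * m ≤ ∫ τ in r..t, f τ := fun t ht =>
    sub_mul_le_integral le_rfl ht (hf.intervalIntegrable r t)
      (fun x hx => hm.le.trans (hmf x hx.1)) fun x hx => hmf x hx.1
  have hF : Continuous fun t => ∫ τ in r..t, f τ :=
    intervalIntegral.continuous_primitive hf.intervalIntegrable r
  have hF_ne : ∀ t ∈ Set.Ici (r + 1), ∫ τ in r..t, f τ ≠ 0 := fun t ht => by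
    have hrt : r < t := (lt_add_one r).trans_le ht
    exact ((mul_pos (sub_pos.2 hrt) hm).trans_le (hlinear t hrt.le)).ne'
  rw [integrableOn_Ici_iff_integrableOn_Ioi, ← Set.Ioc_union_Ioi_eq_Ioi (lt_add_one r).le]
  exact .union
    (integrableOn_Ioc_sqrt_div_of_mul_sub_le ha.continuousOn (fun t _ => ha_nonneg t)
      hF.continuousOn hm fun t ht => hlinear t ht.1.le)
    (integrableOn_Ioi_sqrt_div_of_isBigO_exp ha.continuousOn hF.continuousOn hF_ne hαβ haO
      (exp_isBigO_integral hf hβ hc hcf))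

lemma isBigO_exp_of_tendsto_div_log_rpow {a : ℝ → ℝ} {p l α : ℝ} (hα : 0 < α)
    (h : Tendsto (fun s => a s / Real.log s ^ p) atTop (𝓝 l)) :
    a =O[atTop] fun s => Real.exp (α * s) := by
  have hlog_ne : ∀ᶠ s in atTop, Real.log s ^ p ≠ 0 := by
    filter_upwards [eventually_gt_atTop 1] with s hs
    exact (Real.rpow_pos_of_pos (Real.log_pos hs) p).ne'
  calc a =O[atTop] fun s => Real.log s ^ p :=
        Asymptotics.isBigO_of_div_tendsto_nhds (hlog_ne.mono fun s hs h0 => absurd h0 hs) l h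
    _ =O[atTop] fun s => s ^ (1 : ℝ) :=
        (isLittleO_log_rpow_rpow_atTop p one_pos).isBigO
    _ =O[atTop] fun s => Real.exp (α * s) := (isLittleO_rpow_exp_pos_mul_atTop 1 hα).isBigO

lemma eventually_mul_exp_le_of_tendsto_div {f : ℝ → ℝ} {β c l : ℝ} (hcl : c < l)
    (h : Tendsto (fun s => f s / Real.exp (β * s)) atTop (𝓝 l)) :
    ∀ᶠ s in atTop, c * Real.exp (β * s) ≤ f s :=
  (h.eventually_const_le hcl).mono fun _ hs => (le_div_iff₀ (Real.exp_pos _)).1 hs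

end ExponentialGrowth

theorem stmt_10_general {a f g ginv : ℝ → ℝ} {α β c : ℝ} (ha : Continuous a)
    (ha_pos : ∀ s, 0 < a s) (hf : Continuous f)
    (hg : ∀ s, HasDerivAt g (1 / √(a (g s))) s) (hginv : Function.RightInverse ginv g)
    (hβ : 0 ≤ β) (hαβ : α < β) (hc : 0 < c) (haO : a =O[atTop] fun s => Real.exp (α * s))
    (hcf : ∀ᶠ s in atTop, c * Real.exp (β * s) ≤ f s) :
    ∀ᶠ r in atTop, 0 < f r ∧ (∀ s, r < s → 0 ≤ f s) ∧
      IntegrableOn (fun s => 1 / √(∫ τ in r..(g s), f τ)) (Set.Ici (ginv r)) := by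
  filter_upwards [eventually_forall_ge_atTop.2 hcf] with r hr
  have hf_pos : ∀ s, r ≤ s → 0 < f s := fun s hs =>
    (by positivity : 0 < c * Real.exp (β * s)).trans_le (hr s hs)
  refine ⟨hf_pos r le_rfl, fun s hs => (hf_pos s hs.le).le, ?_⟩
  rw [integrableOn_Ici_comp_iff_of_hasDerivAt_one_div (w := fun t => √(a t))
    (fun t => Real.sqrt_pos.2 (ha_pos t)) hg hginv.surjective
    (fun t => 1 / √(∫ τ in r..t, f τ)), hginv r]
  simpa only [smul_eq_mul, mul_one_div, Real.sqrt_div (ha_pos _).le] using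
    integrableOn_Ici_sqrt_div_integral ha (fun t => (ha_pos t).le) hf hβ hαβ hc haO hr

theorem stmt_10 (a f g ginv : ℝ → ℝ) (ha : ContDiff ℝ 1 a) (ν : ℝ) (hν : 0 < ν)
    (hab : ∀ s, ν ≤ a s) (hf : ContDiff ℝ 1 f)
    (hg : ∀ s, HasDerivAt g (1 / Real.sqrt (a (g s))) s) (hg0 : g 0 = 0)
    (hinv1 : ∀ s, ginv (g s) = s) (hinv2 : ∀ t, g (ginv t) = t)
    (γ β aInf fInf : ℝ) (hγ : 0 < γ) (hβ : 0 < β) (haInf : 0 < aInf) (hfInf : 0 < fInf)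
    (haAsym : Tendsto (fun s => a s / (Real.log s) ^ (2 * γ)) atTop (𝓝 aInf))
    (hfAsym : Tendsto (fun s => f s / Real.exp (2 * β * s)) atTop (𝓝 fInf)) :
    ∃ r : ℝ, 0 < f r ∧ (∀ s, r < s → 0 ≤ f s) ∧
      IntegrableOn (fun s => 1 / Real.sqrt (∫ τ in r..(g s), f τ))
        (Set.Ici (ginv r)) :=
  (stmt_10_general ha.continuous (fun s => hν.trans_le (hab s)) hf.continuous hg hinv2
    (by linarith) (by linarith) (half_pos hfInf) (isBigO_exp_of_tendsto_div_log_rpow hβ haAsym)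
    (eventually_mul_exp_le_of_tendsto_div (half_lt_self hfInf) hfAsym)).exists
end

section
/- Assume a(s)/s^k → a_∞ and f(s)/s^p → f_∞ as s → +∞ with k, a_∞, f_∞ > 0 and p > k + 1, with f ≥ 0 vanishing on (-∞,0] and positive on (0,∞). Let F(t) = ∫_0^t f, g the solution of g' = 1/√(a∘g), g(0)=0, and η the unique solution of η' = −√(2F(g(η))) with η(t) → +∞ as t → 0+. Then lim_{t→0+} η(t) t^{(k+2)/(p−k−1)} = Γ₀, where Γ₀ = [ ((p−k−1)/(k+2)) · √(2f_∞)/√(p+1) · ((k+2)/(2√a_∞))^{(p+1)/(k+2)} ]^{(k+2)/(k+1−p)}. -/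
open Filter Topology MeasureTheory

/-!
If `ψ x ~ K x ^ q` at `+∞` with `q > 1`, a solution of `η' = -ψ ∘ η` blowing up at `0⁺` satisfies
`(η ^ (1 - q))' = (q - 1) ψ(η) / η ^ q → (q - 1) K`, so `η ^ (1 - q) ~ (q - 1) K t` by L'Hôpital's
rule at `0`. For `ψ = √(2 F ∘ g)`, the `∞/∞` form of the rule gives both `F x ~ fInf x ^ (p + 1) /
(p + 1)` and `g s ^ (k / 2 + 1) ~ (k / 2 + 1) s / √aInf`, the latter because
`g' = 1 / √(a ∘ g) ~ 1 / (√aInf g ^ (k / 2))`; hence `q = (p + 1) / (k + 2)`.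
-/

section LHopital

variable {u u' v v' : ℝ → ℝ} {c L : ℝ}

theorem eventually_lt_div_atTop_of_lt_deriv_div (hu : ∀ᶠ x in atTop, HasDerivAt u (u' x) x)
    (hv : ∀ᶠ x in atTop, HasDerivAt v (v' x) x) (hv'_pos : ∀ᶠ x in atTop, 0 < v' x)
    (hv_top : Tendsto v atTop atTop) (hL : Tendsto (fun x => u' x / v' x) atTop (𝓝 L))
    (hc : c < L) : ∀ᶠ x in atTop, c < u x / v x := by
  obtain ⟨d, hcd, hdL⟩ := exists_between hc
  obtain ⟨S, hS⟩ := eventually_atTop.1 <|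
    (hu.and hv).and (hv'_pos.and (hL.eventually_const_lt hdL))
  have hmono : MonotoneOn (fun x => u x - d * v x) (Set.Ici S) := by
    have hderiv : ∀ x ∈ Set.Ici S,
        HasDerivAt (fun x => u x - d * v x) (u' x - d * v' x) x :=
      fun x hx => (hS x hx).1.1.sub ((hS x hx).1.2.const_mul d)
    refine monotoneOn_of_hasDerivWithinAt_nonneg (convex_Ici S)
      (fun x hx => (hderiv x hx).continuousAt.continuousWithinAt)
      (fun x hx => (hderiv x (interior_subset hx)).hasDerivWithinAt) fun x hx => ?_
    obtain ⟨hpos, hlt⟩ := (hS x (interior_subset hx)).2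
    exact sub_nonneg.2 ((lt_div_iff₀ hpos).1 hlt).le
  filter_upwards [eventually_ge_atTop S, hv_top.eventually_gt_atTop 0,
    hv_top.eventually_gt_atTop ((d * v S - u S) / (d - c))] with x hx hvx hlarge
  have hux : u S - d * v S ≤ u x - d * v x := hmono Set.self_mem_Ici hx hx
  have hgap : d * v S - u S < v x * (d - c) := (div_lt_iff₀ (sub_pos.2 hcd)).1 hlarge
  rw [lt_div_iff₀ hvx]
  linarith

theorem tendsto_div_atTop_of_tendsto_deriv_div (hu : ∀ᶠ x in atTop, HasDerivAt u (u' x) x)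
    (hv : ∀ᶠ x in atTop, HasDerivAt v (v' x) x) (hv'_pos : ∀ᶠ x in atTop, 0 < v' x)
    (hv_top : Tendsto v atTop atTop) (hL : Tendsto (fun x => u' x / v' x) atTop (𝓝 L)) :
    Tendsto (fun x => u x / v x) atTop (𝓝 L) := by
  refine tendsto_order.2 ⟨fun c hc =>
    eventually_lt_div_atTop_of_lt_deriv_div hu hv hv'_pos hv_top hL hc, fun c hc => ?_⟩
  have hneg : Tendsto (fun x => -u' x / v' x) atTop (𝓝 (-L)) := by
    simpa only [neg_div] using hL.neg
  filter_upwards [eventually_lt_div_atTop_of_lt_deriv_div (hu.mono fun _ h => h.neg) hv hv'_pos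
    hv_top hneg (neg_lt_neg hc)] with x hx
  rwa [Pi.neg_apply, neg_div, neg_lt_neg_iff] at hx

theorem tendsto_div_id_atTop_of_tendsto_deriv (hu : ∀ᶠ x in atTop, HasDerivAt u (u' x) x)
    (hL : Tendsto u' atTop (𝓝 L)) : Tendsto (fun x => u x / x) atTop (𝓝 L) :=
  tendsto_div_atTop_of_tendsto_deriv_div hu (.of_forall hasDerivAt_id) (.of_forall fun _ => one_pos)
    tendsto_id (by simpa only [div_one] using hL)

end LHopital

section PowerAsymptotics

variable {f g h : ℝ → ℝ} {c ℓ m p α : ℝ}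

theorem tendsto_integral_div_rpow_atTop (hf : Continuous f) (hp : -1 < p)
    (hfp : Tendsto (fun x => f x / x ^ p) atTop (𝓝 ℓ)) (x₀ : ℝ) :
    Tendsto (fun x => (∫ t in x₀..x, f t) / x ^ (p + 1)) atTop (𝓝 (ℓ / (p + 1))) := by
  have hp1 : 0 < p + 1 := by linarith
  refine tendsto_div_atTop_of_tendsto_deriv_div (v' := fun x => (p + 1) * x ^ p)
    (.of_forall fun x => hf.integral_hasStrictDerivAt x₀ x |>.hasDerivAt) ?_ ?_
    (tendsto_rpow_atTop hp1) ?_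
  · filter_upwards [eventually_gt_atTop 0] with x hx
    simpa only [add_sub_cancel_right] using Real.hasDerivAt_rpow_const (p := p + 1) (.inl hx.ne')
  · filter_upwards [eventually_gt_atTop 0] with x hx
    positivity
  · simpa only [div_div, mul_comm] using hfp.div_const (p + 1)

theorem tendsto_sqrt_div_rpow_half (hh : Tendsto (fun x => h x / x ^ α) atTop (𝓝 ℓ)) :
    Tendsto (fun x => √(h x) / x ^ (α / 2)) atTop (𝓝 √ℓ) := by
  refine hh.sqrt.congr' ?_
  filter_upwards [eventually_gt_atTop 0] with x hx
  rw [Real.sqrt_div' _ (by positivity), Real.sqrt_eq_rpow (x ^ α), ← Real.rpow_mul hx.le,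
    mul_one_div]

theorem tendsto_comp_div_rpow (hh : Tendsto (fun x => h x / x ^ α) atTop (𝓝 ℓ))
    (hg_top : Tendsto g atTop atTop) (hg : Tendsto (fun s => g s ^ m / s) atTop (𝓝 c))
    (hc : c ≠ 0) (hm : m ≠ 0) :
    Tendsto (fun s => h (g s) / s ^ (α / m)) atTop (𝓝 (ℓ * c ^ (α / m))) := by
  refine ((hh.comp hg_top).mul (hg.rpow_const (.inl hc))).congr' ?_
  filter_upwards [hg_top.eventually_gt_atTop 0, eventually_gt_atTop 0] with s hgs hs
  have hpow : (g s ^ m) ^ (α / m) = g s ^ α := by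
    rw [← Real.rpow_mul hgs.le, mul_div_cancel₀ _ hm]
  rw [Function.comp_apply, Real.div_rpow (by positivity) hs.le, hpow]
  field_simp

end PowerAsymptotics

section AutonomousODE

variable {b q r C K : ℝ} {φ ψ g η : ℝ → ℝ}

theorem tendsto_atTop_of_hasDerivAt_comp_pos (hφ : Continuous φ) (hφ_pos : ∀ x, 0 < φ x)
    (hg : ∀ s, HasDerivAt g (φ (g s)) s) : Tendsto g atTop atTop := by
  have hmono : Monotone g := monotone_of_hasDerivAt_nonneg hg fun s => (hφ_pos _).le
  refine (tendsto_atTop_of_monotone hmono).resolve_right ?_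
  rintro ⟨l, hl⟩
  have hslope : Tendsto (fun s => g s / s) atTop (𝓝 (φ l)) :=
    tendsto_div_id_atTop_of_tendsto_deriv (.of_forall hg) ((hφ.tendsto l).comp hl)
  have hslope_zero : Tendsto (fun s => g s / s) atTop (𝓝 0) := hl.div_atTop tendsto_id
  exact (hφ_pos l).ne' (tendsto_nhds_unique hslope hslope_zero)

theorem tendsto_rpow_div_id_of_hasDerivAt_comp (hg : ∀ᶠ s in atTop, HasDerivAt g (φ (g s)) s)
    (hg_top : Tendsto g atTop atTop) (hφ : Tendsto (fun x => φ x * x ^ r) atTop (𝓝 C)) :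
    Tendsto (fun s => g s ^ (r + 1) / s) atTop (𝓝 ((r + 1) * C)) := by
  refine tendsto_div_id_atTop_of_tendsto_deriv
    (u' := fun s => (r + 1) * (φ (g s) * g s ^ r)) ?_ ((hφ.comp hg_top).const_mul (r + 1))
  filter_upwards [hg, hg_top.eventually_gt_atTop 0] with s hgs hpos
  convert hgs.rpow_const (p := r + 1) (.inl hpos.ne') using 1
  rw [add_sub_cancel_right]
  ring

theorem tendsto_rpow_one_sub_div_of_hasDerivAt_neg_comp (hq : 1 < q)
    (hψ : Tendsto (fun x => ψ x / x ^ q) atTop (𝓝 K))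
    (hη : ∀ᶠ t in 𝓝[>] b, HasDerivAt η (-ψ (η t)) t) (hη_top : Tendsto η (𝓝[>] b) atTop) :
    Tendsto (fun t => η t ^ (1 - q) / (t - b)) (𝓝[>] b) (𝓝 ((q - 1) * K)) := by
  have hη_pos : ∀ᶠ t in 𝓝[>] b, 0 < η t := hη_top.eventually_gt_atTop 0
  refine HasDerivAt.lhopital_zero_nhdsGT (f' := fun t => -ψ (η t) * (1 - q) * η t ^ (1 - q - 1))
    (g' := fun _ => 1) ?_ (.of_forall fun t => (hasDerivAt_id t).sub_const b)
    (.of_forall fun _ => one_ne_zero) ?_ ?_ ?_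
  · filter_upwards [hη, hη_pos] with t ht hpos
    exact ht.rpow_const (.inl hpos.ne')
  · simpa only [neg_sub, Function.comp_def] using
      (tendsto_rpow_neg_atTop (sub_pos.2 hq)).comp hη_top
  · exact tendsto_nhdsWithin_of_tendsto_nhds (tendsto_sub_nhds_zero_iff.2 tendsto_id)
  · refine ((hψ.comp hη_top).const_mul (q - 1)).congr' ?_
    filter_upwards [hη_pos] with t hpos
    have hpow : η t ^ (1 - q - 1) = (η t ^ q)⁻¹ := by
      rw [← Real.rpow_neg hpos.le]
      ring_nf
    rw [Function.comp_apply, hpow]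
    ring

theorem tendsto_mul_sub_rpow_of_hasDerivAt_neg_comp (hq : 1 < q) (hK : 0 < K)
    (hψ : Tendsto (fun x => ψ x / x ^ q) atTop (𝓝 K))
    (hη : ∀ᶠ t in 𝓝[>] b, HasDerivAt η (-ψ (η t)) t) (hη_top : Tendsto η (𝓝[>] b) atTop) :
    Tendsto (fun t => η t * (t - b) ^ (q - 1)⁻¹) (𝓝[>] b) (𝓝 (((q - 1) * K) ^ (-(q - 1)⁻¹))) := by
  have hq0 : 0 < q - 1 := sub_pos.2 hq
  refine ((tendsto_rpow_one_sub_div_of_hasDerivAt_neg_comp hq hψ hη hη_top).rpow_const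
    (.inl (mul_pos hq0 hK).ne')).congr' ?_
  filter_upwards [hη_top.eventually_gt_atTop 0, self_mem_nhdsWithin] with t hpos ht
  have htb : 0 ≤ t - b := (sub_pos.2 ht).le
  have hexp : (1 - q) * -(q - 1)⁻¹ = 1 := by
    field_simp
    ring
  rw [Real.div_rpow (by positivity) htb, ← Real.rpow_mul hpos.le, hexp, Real.rpow_one,
    Real.rpow_neg htb, div_inv_eq_mul]

end AutonomousODE

section Transformation

variable {a f g : ℝ → ℝ} {k p aInf fInf : ℝ}

theorem tendsto_rpow_div_id_of_hasDerivAt_one_div_sqrt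
    (hg : ∀ᶠ s in atTop, HasDerivAt g (1 / √(a (g s))) s) (hg_top : Tendsto g atTop atTop)
    (haInf : 0 < aInf) (ha : Tendsto (fun s => a s / s ^ k) atTop (𝓝 aInf)) :
    Tendsto (fun s => g s ^ ((k + 2) / 2) / s) atTop (𝓝 ((k + 2) / (2 * √aInf))) := by
  have hφ : Tendsto (fun x => 1 / √(a x) * x ^ (k / 2)) atTop (𝓝 (√aInf)⁻¹) := by
    simpa only [inv_div, one_div_mul_eq_div] using
      (tendsto_sqrt_div_rpow_half ha).inv₀ (Real.sqrt_pos.2 haInf).ne'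
  convert tendsto_rpow_div_id_of_hasDerivAt_comp (φ := fun x => 1 / √(a x)) hg hg_top hφ using 2
  · ring_nf
  · field_simp

theorem tendsto_sqrt_two_mul_integral_comp_div_rpow (hf : Continuous f) (hk : -2 < k)
    (hp : -1 < p) (haInf : 0 < aInf) (hg_top : Tendsto g atTop atTop)
    (hg : Tendsto (fun s => g s ^ ((k + 2) / 2) / s) atTop (𝓝 ((k + 2) / (2 * √aInf))))
    (hfp : Tendsto (fun s => f s / s ^ p) atTop (𝓝 fInf)) :
    Tendsto (fun s => √(2 * ∫ τ in (0 : ℝ)..g s, f τ) / s ^ ((p + 1) / (k + 2))) atTop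
      (𝓝 (√(2 * fInf) / √(p + 1) * ((k + 2) / (2 * √aInf)) ^ ((p + 1) / (k + 2)))) := by
  have hk2 : 0 < k + 2 := by linarith
  have hψ : Tendsto (fun x => √(2 * ∫ τ in (0 : ℝ)..x, f τ) / x ^ ((p + 1) / 2)) atTop
      (𝓝 (√(2 * fInf) / √(p + 1))) := by
    rw [← Real.sqrt_div' _ (by linarith), mul_div_assoc]
    refine tendsto_sqrt_div_rpow_half ?_
    simpa only [mul_div_assoc] using (tendsto_integral_div_rpow_atTop hf hp hfp 0).const_mul 2
  simpa only [div_div_div_cancel_right₀ (two_ne_zero' ℝ)] using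
    tendsto_comp_div_rpow hψ hg_top hg (by positivity) (by positivity)

end Transformation

theorem stmt_18_general (a f g η : ℝ → ℝ) (ha : Continuous a) (ha_pos : ∀ s, 0 < a s)
    (hf : Continuous f) (hg : ∀ s, HasDerivAt g (1 / √(a (g s))) s)
    (k p aInf fInf : ℝ) (hk : -2 < k) (hp : k + 1 < p) (haInf : 0 < aInf) (hfInf : 0 < fInf)
    (haAsym : Tendsto (fun s => a s / s ^ k) atTop (𝓝 aInf))
    (hfAsym : Tendsto (fun s => f s / s ^ p) atTop (𝓝 fInf))
    (hη : ∀ᶠ t in 𝓝[>] (0 : ℝ), HasDerivAt η (-√(2 * ∫ τ in (0 : ℝ)..g (η t), f τ)) t)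
    (hηblow : Tendsto η (𝓝[>] (0 : ℝ)) atTop) :
    Tendsto (fun t => η t * t ^ ((k + 2) / (p - k - 1))) (𝓝[>] (0 : ℝ))
      (𝓝 ((((p - k - 1) / (k + 2)) * (√(2 * fInf) / √(p + 1)) *
        ((k + 2) / (2 * √aInf)) ^ ((p + 1) / (k + 2))) ^ ((k + 2) / (k + 1 - p)))) := by
  have hk2 : 0 < k + 2 := by linarith
  have hp1 : 0 < p + 1 := by linarith
  have hg_top : Tendsto g atTop atTop :=
    tendsto_atTop_of_hasDerivAt_comp_pos (φ := fun x => 1 / √(a x))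
      (continuous_const.div ha.sqrt fun x => (Real.sqrt_pos.2 (ha_pos x)).ne')
      (fun x => one_div_pos.2 (Real.sqrt_pos.2 (ha_pos x))) hg
  have hψ := tendsto_sqrt_two_mul_integral_comp_div_rpow hf hk (by linarith) haInf hg_top
    (tendsto_rpow_div_id_of_hasDerivAt_one_div_sqrt (.of_forall hg) hg_top haInf haAsym) hfAsym
  have hq : 1 < (p + 1) / (k + 2) := (one_lt_div hk2).2 (by linarith)
  have hq_sub : (p + 1) / (k + 2) - 1 = (p - k - 1) / (k + 2) := by
    field_simp
    ring
  have hexp : (k + 2) / (k + 1 - p) = -((k + 2) / (p - k - 1)) := by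
    rw [← div_neg]
    ring_nf
  simpa only [sub_zero, hq_sub, inv_div, hexp, mul_assoc] using
    tendsto_mul_sub_rpow_of_hasDerivAt_neg_comp hq (by positivity) hψ hη hηblow

theorem stmt_18 (a f g η : ℝ → ℝ) (ha : ContDiff ℝ 1 a) (ν : ℝ) (hν : 0 < ν)
    (hab : ∀ s, ν ≤ a s) (hf : ContDiff ℝ 1 f)
    (hf0 : ∀ s ≤ (0:ℝ), f s = 0) (hfpos : ∀ s > (0:ℝ), 0 < f s)
    (hg : ∀ s, HasDerivAt g (1 / Real.sqrt (a (g s))) s) (hg0 : g 0 = 0)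
    (k p aInf fInf : ℝ) (hk : 0 < k) (hp : k + 1 < p)
    (haInf : 0 < aInf) (hfInf : 0 < fInf)
    (haAsym : Tendsto (fun s => a s / s ^ k) atTop (𝓝 aInf))
    (hfAsym : Tendsto (fun s => f s / s ^ p) atTop (𝓝 fInf))
    (F : ℝ → ℝ) (hF : ∀ t, F t = ∫ τ in (0:ℝ)..t, f τ)
    (hη : ∀ t > (0:ℝ), HasDerivAt η (-Real.sqrt (2 * F (g (η t)))) t)
    (hηblow : Tendsto η (𝓝[>] (0:ℝ)) atTop) :
    Tendsto (fun t => η t * t ^ ((k + 2) / (p - k - 1))) (𝓝[>] (0:ℝ))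
      (𝓝 ((((p - k - 1) / (k + 2)) * (Real.sqrt (2 * fInf) / Real.sqrt (p + 1)) *
        ((k + 2) / (2 * Real.sqrt aInf)) ^ ((p + 1) / (k + 2)))
          ^ ((k + 2) / (k + 1 - p)))) := by
  obtain rfl : F = fun t => ∫ τ in (0 : ℝ)..t, f τ := funext hF
  exact stmt_18_general a f g η ha.continuous (fun s => hν.trans_le (hab s)) hf.continuous hg k p
    aInf fInf (by linarith) hp haInf hfInf haAsym hfAsym (eventually_mem_nhdsWithin.mono hη) hηblow
end
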